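/- arXiv:2412.07483 — 3 statements merged into one kernel-verified Lean document; each statement's English description precedes it below -/
import Mathlib

section
/- Let f = t0·t1·t2 + t0·t1·t3 + t0·t2·t3 + t1·t2·t3 in ℂ[t0,t1,t2,t3]. A 2-dimensional ℂ-subspace W ⊆ ℂ⁴ satisfies f(x) = 0 for all x ∈ W if and only if W is one of the following nine subspaces: the six 'edge' subspaces span{eᵢ, eⱼ} for 0 ≤ i < j ≤ 3, or the three 'joining' subspaces span{e0 − e1, e2 − e3}, span{e0 − e2, e1 − e3}, span{e0 − e3, e1 − e2}. (Hence the Cayley cubic contains exactly 9 lines: the six edges of the tetrahedron of singular points and the three lines joining pairs of opposite edges.) -/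
open MvPolynomial

noncomputable def cayleyCubic : MvPolynomial (Fin 4) ℂ :=
  X 0 * X 1 * X 2 + X 0 * X 1 * X 3 + X 0 * X 2 * X 3 + X 1 * X 2 * X 3

noncomputable def e (i : Fin 4) : Fin 4 → ℂ := Pi.single i 1

/-!
The cubic is the third elementary symmetric polynomial. Some two coordinates `xᵢ, xⱼ` restrict to
linear coordinates on a plane `W`, and the remaining two become `xₖ = a xᵢ + b xⱼ` and
`xₗ = c xᵢ + d xⱼ`. The restriction of the cubic to `W` is then a binary cubic in `xᵢ, xⱼ`, and its
four coefficients vanish only if `W` is the edge `xₖ = xₗ = 0` or one of the joining lines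
`xᵢ + xₖ = xⱼ + xₗ = 0` and `xᵢ + xₗ = xⱼ + xₖ = 0`. A binary cubic is determined by its values as
soon as the field has an element other than `0` and `1`.
-/

section Subspaces

theorem eq_span_pair_of_finrank_eq_two {K V : Type*} [DivisionRing K] [AddCommGroup V] [Module K V]
    {W : Submodule K V} (hW : Module.finrank K W = 2) {a b : V}
    (hle : W ≤ Submodule.span K {a, b}) : W = Submodule.span K {a, b} := by
  classical
  have : FiniteDimensional K (Submodule.span K {a, b}) := .span_of_finite K (Set.toFinite _)
  refine Submodule.eq_of_le_of_finrank_le hle ?_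
  calc Module.finrank K (Submodule.span K {a, b}) ≤ ({a, b} : Finset V).card := by
        rw [← Finset.coe_pair]
        exact finrank_span_finset_le_card _
    _ ≤ Module.finrank K W := Finset.card_le_two.trans hW.ge

variable {K ι : Type*} [Field K]

theorem exists_coordinates_bijective [Finite ι] [LinearOrder ι] {n : ℕ} {W : Submodule K (ι → K)}
    (hW : Module.finrank K W = n) :
    ∃ a : Fin n ↪o ι, Function.Bijective fun (x : W) (m : Fin n) ↦ x.1 (a m) := by
  classical
  have := Fintype.ofFinite ι
  let coord (i : ι) : Module.Dual K W := (LinearMap.proj i).comp W.subtype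
  obtain ⟨s, -, -, hspan, hli⟩ :=
    exists_linearIndepOn_extension (linearIndepOn_empty K coord) (Set.empty_subset Set.univ)
  let restrict : W →ₗ[K] (s → K) := LinearMap.pi fun i ↦ coord i
  have hinj : Function.Injective restrict := by
    refine (injective_iff_map_eq_zero _).2 fun x hx ↦ Subtype.ext (funext fun i ↦ ?_)
    have hker : Submodule.span K (coord '' s) ≤ LinearMap.ker (Module.Dual.eval K W x) :=
      Submodule.span_le.2 (Set.image_subset_iff.2 fun j hj ↦ congrFun hx ⟨j, hj⟩)
    exact hker (hspan (Set.mem_image_of_mem coord (Set.mem_univ i)))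
  have hcard : Fintype.card s = n := by
    refine le_antisymm ?_ ?_
    · simpa [hW] using hli.linearIndependent.fintype_card_le_finrank
    · simpa [hW] using LinearMap.finrank_le_finrank_of_injective hinj
  have hsurj : Function.Surjective restrict :=
    (LinearMap.injective_iff_surjective_of_finrank_eq_finrank (by simp [hW, hcard])).1 hinj
  let enum : Fin n ≃o s := monoEquivOfFin s hcard
  exact ⟨enum.toOrderEmbedding.trans (OrderEmbedding.subtype _),
    (enum.toEquiv.arrowCongr (Equiv.refl K)).symm.bijective.comp ⟨hinj, hsurj⟩⟩

theorem exists_coordinate_pair_bijective [Finite ι] [LinearOrder ι] {W : Submodule K (ι → K)}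
    (hW : Module.finrank K W = 2) :
    ∃ i j, i < j ∧ Function.Bijective fun x : W ↦ (x.1 i, x.1 j) := by
  obtain ⟨a, ha⟩ := exists_coordinates_bijective hW
  exact ⟨a 0, a 1, a.lt_iff_lt.2 Fin.zero_lt_one, (finTwoArrowEquiv K).bijective.comp ha⟩

theorem exists_coordinate_eq_of_pair_bijective {R ι : Type*} [CommSemiring R]
    {W : Submodule R (ι → R)} {i j : ι}
    (hbij : Function.Bijective fun x : W ↦ (x.1 i, x.1 j)) (k : ι) :
    ∃ a b : R, ∀ x ∈ W, x k = a * x i + b * x j := by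
  obtain ⟨p, hp⟩ := hbij.2 (1, 0)
  obtain ⟨q, hq⟩ := hbij.2 (0, 1)
  rw [Prod.mk.injEq] at hp hq
  refine ⟨p.1 k, q.1 k, fun x hx ↦ ?_⟩
  have hxpq : ⟨x, hx⟩ = x i • p + x j • q := hbij.1 (by simp [hp, hq])
  simpa [mul_comm] using congrFun (congrArg Subtype.val hxpq) k

end Subspaces

section Lines

variable {i j k l : Fin 4}

theorem univ_val_eq_of_nodup (h : [i, j, k, l].Nodup) :
    (Finset.univ : Finset (Fin 4)).val = {i, j, k, l} := by
  revert i j k l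
  decide

theorem eq_or_eq_or_eq_or_eq_of_nodup (h : [i, j, k, l].Nodup) (m : Fin 4) :
    m = i ∨ m = j ∨ m = k ∨ m = l := by
  simpa [univ_val_eq_of_nodup h] using Finset.mem_univ_val m

theorem eval_esymm_three {R : Type*} [CommSemiring R] (h : [i, j, k, l].Nodup) (x : Fin 4 → R) :
    eval x (esymm (Fin 4) R 3) = x i * x j * (x k + x l) + x k * x l * (x i + x j) := by
  rw [← coe_aeval_eq_eval, RingHom.coe_coe, aeval_esymm_eq_multiset_esymm, univ_val_eq_of_nodup h]
  simp only [Multiset.esymm, Multiset.insert_eq_cons, Multiset.map_cons, Multiset.map_singleton,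
    Multiset.powersetCard_cons, Nat.reduceAdd, Multiset.card_cons, Multiset.card_singleton,
    Nat.lt_add_one, Multiset.powersetCard_eq_empty, Order.lt_two_iff, Std.le_refl,
    Multiset.powersetCard_one, zero_add, Multiset.powersetCard_zero_left,
    Multiset.cons_zero, Multiset.singleton_add, Multiset.add_cons, Multiset.prod_cons,
    Multiset.prod_singleton, Multiset.sum_cons, Multiset.sum_singleton]
  ring

variable {R : Type*} [CommRing R]

variable (R) in
/-- The edge of the coordinate tetrahedron through the vertices `i` and `j`, a line of `ℙ³` encoded
as a submodule of `R⁴`. -/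
def edgeLine (i j : Fin 4) : Submodule R (Fin 4 → R) :=
  Submodule.span R {Pi.single i 1, Pi.single j 1}

variable (R) in
/-- The line of `ℙ³`, encoded as a submodule of `R⁴`, that joins the point `eᵢ - eⱼ` of the edge
`ij` of the coordinate tetrahedron to the point `eₖ - eₗ` of the opposite edge `kl`. -/
def joiningLine (i j k l : Fin 4) : Submodule R (Fin 4 → R) :=
  Submodule.span R {Pi.single i 1 - Pi.single j 1, Pi.single k 1 - Pi.single l 1}

theorem joiningLine_comm (i j k l : Fin 4) : joiningLine R k l i j = joiningLine R i j k l :=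
  congrArg (Submodule.span R) (Set.pair_comm _ _)

theorem joiningLine_swap_left (i j k l : Fin 4) :
    joiningLine R j i k l = joiningLine R i j k l := by
  rw [joiningLine, joiningLine, ← neg_sub (Pi.single i 1) (Pi.single j 1), Submodule.span_insert,
    Submodule.span_insert, ← Set.neg_singleton, Submodule.span_neg]

theorem mem_edgeLine_iff (h : [i, j, k, l].Nodup) {x : Fin 4 → R} :
    x ∈ edgeLine R i j ↔ x k = 0 ∧ x l = 0 := by
  simp only [edgeLine, Submodule.mem_span_pair, funext_iff, Pi.add_apply, Pi.smul_apply,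
    smul_eq_mul, Pi.single_apply]
  exact ⟨by grind, fun _ ↦ ⟨x i, x j, fun m ↦ by grind [eq_or_eq_or_eq_or_eq_of_nodup h m]⟩⟩

theorem mem_joiningLine_iff (h : [i, j, k, l].Nodup) {x : Fin 4 → R} :
    x ∈ joiningLine R i j k l ↔ x i + x j = 0 ∧ x k + x l = 0 := by
  simp only [joiningLine, Submodule.mem_span_pair, funext_iff, Pi.add_apply, Pi.sub_apply,
    Pi.smul_apply, smul_eq_mul, Pi.single_apply]
  exact ⟨by grind, fun _ ↦ ⟨x i, x k, fun m ↦ by grind [eq_or_eq_or_eq_or_eq_of_nodup h m]⟩⟩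

theorem eval_esymm_three_of_mem_edgeLine (hij : i ≠ j) {x : Fin 4 → R}
    (hx : x ∈ edgeLine R i j) : eval x (esymm (Fin 4) R 3) = 0 := by
  obtain ⟨k, l, h⟩ : ∃ k l, [i, j, k, l].Nodup := by
    clear hx
    revert i j
    decide
  obtain ⟨hk, hl⟩ := (mem_edgeLine_iff h).1 hx
  simp [eval_esymm_three h, hk, hl]

theorem eval_esymm_three_of_mem_joiningLine (h : [i, j, k, l].Nodup) {x : Fin 4 → R}
    (hx : x ∈ joiningLine R i j k l) : eval x (esymm (Fin 4) R 3) = 0 := by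
  obtain ⟨hij, hkl⟩ := (mem_joiningLine_iff h).1 hx
  simp [eval_esymm_three h, hij, hkl]

end Lines

section BinaryCubic

variable {R : Type*} [CommRing R] [IsDomain R]

theorem binary_cubic_coefficients_eq_zero [Nontrivial Rˣ] {A B C D : R}
    (h : ∀ s t : R, A * s ^ 3 + B * s ^ 2 * t + C * s * t ^ 2 + D * t ^ 3 = 0) :
    A = 0 ∧ B = 0 ∧ C = 0 ∧ D = 0 := by
  obtain ⟨u, hu⟩ := exists_ne (1 : Rˣ)
  have hu1 : (u : R) - 1 ≠ 0 := sub_ne_zero.2 (by simpa using hu)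
  have hA : A = 0 := by simpa using h 1 0
  have hD : D = 0 := by simpa using h 0 1
  have at_one : B + C = 0 := by simpa [hA, hD] using h 1 1
  have at_u : u * (B + C * u) = 0 := by linear_combination h 1 u - hA - u ^ 3 * hD
  have sub_one_mul : (u - 1) * C = 0 := by
    linear_combination (mul_eq_zero.1 at_u).resolve_left u.ne_zero - at_one
  have hC : C = 0 := (mul_eq_zero.1 sub_one_mul).resolve_left hu1
  exact ⟨hA, by simpa [hC] using at_one, hC, hD⟩

theorem slopes_eq_of_coefficients_eq_zero {a b c d : R} (hac : a * c = 0) (hbd : b * d = 0)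
    (hs : a + c + a * d + b * c = 0) (ht : b + d + a * d + b * c = 0) :
    (a = 0 ∧ b = 0 ∧ c = 0 ∧ d = 0) ∨ (a = -1 ∧ b = 0 ∧ c = 0 ∧ d = -1) ∨
      (a = 0 ∧ b = -1 ∧ c = -1 ∧ d = 0) := by
  rcases mul_eq_zero.1 hac with rfl | rfl <;> rcases mul_eq_zero.1 hbd with rfl | rfl
  · exact .inl ⟨rfl, rfl, by simpa using hs, by simpa using ht⟩
  · obtain rfl : c = b := by linear_combination hs - ht
    rcases mul_eq_zero.1 (by linear_combination hs : c * (c + 1) = 0) with hc | hc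
    · exact .inl ⟨rfl, hc, hc, rfl⟩
    · exact .inr (.inr ⟨rfl, eq_neg_of_add_eq_zero_left hc, eq_neg_of_add_eq_zero_left hc, rfl⟩)
  · obtain rfl : a = d := by linear_combination hs - ht
    rcases mul_eq_zero.1 (by linear_combination hs : a * (a + 1) = 0) with ha | ha
    · exact .inl ⟨ha, rfl, rfl, ha⟩
    · exact .inr (.inl ⟨eq_neg_of_add_eq_zero_left ha, rfl, rfl, eq_neg_of_add_eq_zero_left ha⟩)
  · exact .inl ⟨by simpa using hs, by simpa using ht, rfl, rfl⟩

end BinaryCubic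

section Classification

variable {K : Type*} [Field K] {W : Submodule K (Fin 4 → K)} {i j k l : Fin 4}

theorem le_edgeLine_or_le_joiningLine [Nontrivial Kˣ] (h : [i, j, k, l].Nodup)
    (hbij : Function.Bijective fun x : W ↦ (x.1 i, x.1 j))
    (hcubic : ∀ x ∈ W, eval x (esymm (Fin 4) K 3) = 0) :
    W ≤ edgeLine K i j ∨ W ≤ joiningLine K i k j l ∨ W ≤ joiningLine K i l j k := by
  simp only [SetLike.le_def, mem_edgeLine_iff h,
    mem_joiningLine_iff (show [i, k, j, l].Nodup by grind),
    mem_joiningLine_iff (show [i, l, j, k].Nodup by grind)]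
  obtain ⟨a, b, hk⟩ := exists_coordinate_eq_of_pair_bijective hbij k
  obtain ⟨c, d, hl⟩ := exists_coordinate_eq_of_pair_bijective hbij l
  have hrestrict (s t : K) : a * c * s ^ 3 + (a + c + a * c + a * d + b * c) * s ^ 2 * t +
      (b + d + a * d + b * c + b * d) * s * t ^ 2 + b * d * t ^ 3 = 0 := by
    obtain ⟨⟨x, hx⟩, hxst⟩ := hbij.2 (s, t)
    obtain ⟨rfl, rfl⟩ := Prod.mk.inj hxst
    have hx0 := hcubic x hx
    rw [eval_esymm_three h, hk x hx, hl x hx] at hx0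
    linear_combination hx0
  obtain ⟨hac, hs, ht, hbd⟩ := binary_cubic_coefficients_eq_zero hrestrict
  refine (slopes_eq_of_coefficients_eq_zero hac hbd (by linear_combination hs - hac)
    (by linear_combination ht - hbd)).imp ?_ (Or.imp ?_ ?_) <;>
  · rintro ⟨rfl, rfl, rfl, rfl⟩ x hx
    simp [hk x hx, hl x hx]

theorem cayleyCubic_lines_general [Nontrivial Kˣ] (hW : Module.finrank K W = 2) :
    (∀ x ∈ W, eval x (esymm (Fin 4) K 3) = 0) ↔
      W = edgeLine K 0 1 ∨ W = edgeLine K 0 2 ∨ W = edgeLine K 0 3 ∨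
      W = edgeLine K 1 2 ∨ W = edgeLine K 1 3 ∨ W = edgeLine K 2 3 ∨
      W = joiningLine K 0 1 2 3 ∨ W = joiningLine K 0 2 1 3 ∨ W = joiningLine K 0 3 1 2 := by
  constructor
  · intro hcubic
    obtain ⟨i, j, hij, hbij⟩ := exists_coordinate_pair_bijective hW
    have classify (k l : Fin 4) (h : [i, j, k, l].Nodup) :
        W = edgeLine K i j ∨ W = joiningLine K i k j l ∨ W = joiningLine K i l j k :=
      (le_edgeLine_or_le_joiningLine h hbij hcubic).imp (eq_span_pair_of_finrank_eq_two hW)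
        (Or.imp (eq_span_pair_of_finrank_eq_two hW) (eq_span_pair_of_finrank_eq_two hW))
    obtain ⟨rfl, rfl⟩ | ⟨rfl, rfl⟩ | ⟨rfl, rfl⟩ | ⟨rfl, rfl⟩ | ⟨rfl, rfl⟩ | ⟨rfl, rfl⟩ :
        (i = 0 ∧ j = 1) ∨ (i = 0 ∧ j = 2) ∨ (i = 0 ∧ j = 3) ∨
        (i = 1 ∧ j = 2) ∨ (i = 1 ∧ j = 3) ∨ (i = 2 ∧ j = 3) := by lia
    · grind [classify 2 3 (by decide), joiningLine_comm, joiningLine_swap_left]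
    · grind [classify 1 3 (by decide), joiningLine_comm, joiningLine_swap_left]
    · grind [classify 1 2 (by decide), joiningLine_comm, joiningLine_swap_left]
    · grind [classify 0 3 (by decide), joiningLine_comm, joiningLine_swap_left]
    · grind [classify 0 2 (by decide), joiningLine_comm, joiningLine_swap_left]
    · grind [classify 0 1 (by decide), joiningLine_comm, joiningLine_swap_left]
  · rintro (rfl | rfl | rfl | rfl | rfl | rfl | rfl | rfl | rfl) x hx
    iterate 6 exact eval_esymm_three_of_mem_edgeLine (by decide) hx
    iterate 3 exact eval_esymm_three_of_mem_joiningLine (by decide) hx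

end Classification

theorem cayleyCubic_eq_esymm : cayleyCubic = esymm (Fin 4) ℂ 3 := by
  refine MvPolynomial.funext fun x ↦ ?_
  rw [eval_esymm_three (i := 0) (j := 1) (k := 2) (l := 3) (by decide)]
  simp only [cayleyCubic, map_add, map_mul, eval_X]
  ring

theorem cayleyCubic_lines (W : Submodule ℂ (Fin 4 → ℂ)) (hW : Module.finrank ℂ W = 2) :
    (∀ x ∈ W, eval x cayleyCubic = 0) ↔
      W = Submodule.span ℂ {e 0, e 1} ∨
      W = Submodule.span ℂ {e 0, e 2} ∨
      W = Submodule.span ℂ {e 0, e 3} ∨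
      W = Submodule.span ℂ {e 1, e 2} ∨
      W = Submodule.span ℂ {e 1, e 3} ∨
      W = Submodule.span ℂ {e 2, e 3} ∨
      W = Submodule.span ℂ {e 0 - e 1, e 2 - e 3} ∨
      W = Submodule.span ℂ {e 0 - e 2, e 1 - e 3} ∨
      W = Submodule.span ℂ {e 0 - e 3, e 1 - e 2} := by
  have : Nontrivial ℂˣ := ⟨1, -1, by norm_num [Units.ext_iff]⟩
  rw [cayleyCubic_eq_esymm]
  exact cayleyCubic_lines_general hW
end

section
/- Let g = t0·t2·t3 − t1²·t3 − t0·t1² in ℂ[t0,t1,t2,t3]. Then the set of points x ∈ ℂ⁴ at which all four partial derivatives of g vanish, {x ∈ ℂ⁴ : ∀ i, (∂ᵢ g)(x) = 0}, is exactly ℂ·e0 ∪ ℂ·e2 ∪ ℂ·e3. (Hence the cubic surface {g = 0} ⊂ ℙ³ of type 2A1A3 has exactly three singular points: P0 = (1:0:0:0) and P3 = (0:0:0:1) of type A1, and P2 = (0:0:1:0) of type A3.) -/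
open MvPolynomial

noncomputable def cubic2A1A3 : MvPolynomial (Fin 4) ℂ :=
  X 0 * X 2 * X 3 - X 1 ^ 2 * X 3 - X 0 * X 1 ^ 2

/-! The equations `∂₂ = 0`, `∂₀ = 0` and `∂₃ = 0` read `t0 t3 = 0`, `t2 t3 = t1²` and
`t0 t2 = t1²`. Multiplying the last two gives `t1⁴ = 0`, so over a reduced ring the singular locus
is cut out by `t1 = 0` together with the vanishing of the pairwise products of `t0`, `t2`, `t3`, and
over a domain the latter says that at most one of these three coordinates is nonzero. The remaining
partial derivative `∂₁` is divisible by `t1`, so it imposes no further condition. -/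

/-- The cubic form `cubic2A1A3` with coefficients in an arbitrary commutative ring `R`, so that its
singular locus can be computed over any `R` without zero divisors. -/
noncomputable def cubic2A1A3Over (R : Type*) [CommRing R] : MvPolynomial (Fin 4) R :=
  X 0 * X 2 * X 3 - X 1 ^ 2 * X 3 - X 0 * X 1 ^ 2

theorem mem_span_single_one_iff {ι R : Type*} [DecidableEq ι] [Semiring R] {i : ι} {x : ι → R} :
    x ∈ Submodule.span R {Pi.single i (1 : R)} ↔ ∀ j ≠ i, x j = 0 := by
  rw [Submodule.mem_span_singleton]
  constructor
  · rintro ⟨c, rfl⟩ j hj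
    simp [hj]
  · intro hx
    refine ⟨x i, funext fun j => ?_⟩
    obtain rfl | hj := eq_or_ne j i
    · simp
    · simp [hj, hx j hj]

section CommRing

variable {R : Type*} [CommRing R]

theorem pderiv_cubic2A1A3Over (i : Fin 4) :
    pderiv i (cubic2A1A3Over R) =
      ![X 2 * X 3 - X 1 ^ 2, -(2 * X 1 * (X 0 + X 3)), X 0 * X 3, X 0 * X 2 - X 1 ^ 2] i := by
  fin_cases i <;> simp [cubic2A1A3Over, pderiv_X] <;> ring

theorem forall_eval_pderiv_cubic2A1A3Over_eq_zero_iff {x : Fin 4 → R} :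
    (∀ i, eval x (pderiv i (cubic2A1A3Over R)) = 0) ↔
      x 2 * x 3 = x 1 ^ 2 ∧ 2 * x 1 * (x 0 + x 3) = 0 ∧ x 0 * x 3 = 0 ∧ x 0 * x 2 = x 1 ^ 2 := by
  simp [pderiv_cubic2A1A3Over, Fin.forall_fin_succ, sub_eq_zero]

theorem forall_eval_pderiv_cubic2A1A3Over_eq_zero_iff_of_isReduced [IsReduced R] {x : Fin 4 → R} :
    (∀ i, eval x (pderiv i (cubic2A1A3Over R)) = 0) ↔
      x 1 = 0 ∧ x 0 * x 2 = 0 ∧ x 0 * x 3 = 0 ∧ x 2 * x 3 = 0 := by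
  rw [forall_eval_pderiv_cubic2A1A3Over_eq_zero_iff]
  constructor
  · rintro ⟨h23, -, h03, h02⟩
    have h1 : x 1 = 0 := by
      refine eq_zero_of_pow_eq_zero (n := 4) ?_
      calc
        x 1 ^ 4 = x 0 * x 2 * (x 2 * x 3) := by rw [h02, h23]; ring
        _ = x 0 * x 3 * x 2 ^ 2 := by ring
        _ = 0 := by rw [h03, zero_mul]
    exact ⟨h1, by simp [h02, h1], h03, by simp [h23, h1]⟩
  · rintro ⟨h1, h02, h03, h23⟩
    simp [h1, h02, h03, h23]

end CommRing

theorem cubic2A1A3_singular_locus_general (R : Type*) [CommRing R] [NoZeroDivisors R] :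
    {x : Fin 4 → R | ∀ i, eval x (pderiv i (cubic2A1A3Over R)) = 0} =
      (Submodule.span R {(Pi.single 0 1 : Fin 4 → R)} : Set (Fin 4 → R)) ∪
      (Submodule.span R {(Pi.single 2 1 : Fin 4 → R)} : Set (Fin 4 → R)) ∪
      (Submodule.span R {(Pi.single 3 1 : Fin 4 → R)} : Set (Fin 4 → R)) := by
  ext x
  have axis_zero : (∀ j ≠ 0, x j = 0) ↔ x 1 = 0 ∧ x 2 = 0 ∧ x 3 = 0 := by
    simp [Fin.forall_fin_succ]
  have axis_two : (∀ j ≠ 2, x j = 0) ↔ x 0 = 0 ∧ x 1 = 0 ∧ x 3 = 0 := by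
    simp [Fin.forall_fin_succ]
  have axis_three : (∀ j ≠ 3, x j = 0) ↔ x 0 = 0 ∧ x 1 = 0 ∧ x 2 = 0 := by
    simp [Fin.forall_fin_succ]
  simp only [Set.mem_ofPred_eq, forall_eval_pderiv_cubic2A1A3Over_eq_zero_iff_of_isReduced,
    Set.mem_union, SetLike.mem_coe, mem_span_single_one_iff, mul_eq_zero, axis_zero, axis_two,
    axis_three]
  tauto

theorem cubic2A1A3_singular_locus :
    {x : Fin 4 → ℂ | ∀ i, eval x (pderiv i cubic2A1A3) = 0} =
      (Submodule.span ℂ {e 0} : Set (Fin 4 → ℂ)) ∪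
      (Submodule.span ℂ {e 2} : Set (Fin 4 → ℂ)) ∪
      (Submodule.span ℂ {e 3} : Set (Fin 4 → ℂ)) :=
  cubic2A1A3_singular_locus_general ℂ
end

section
/- Let h = t3·(t0·t2 − t1²) + t0³ in ℂ[t0,t1,t2,t3]. A 2-dimensional ℂ-subspace W ⊆ ℂ⁴ satisfies h(x) = 0 for all x ∈ W if and only if W = span{e2, e3} or W = span{e1, e2}. (Hence the cubic surface of type A1A5 contains exactly 2 lines: L1 = {t0 = t1 = 0}, which passes through both singular points, and L2 = {t0 = t3 = 0}, which meets the singular locus only in the A5 point.) -/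
open MvPolynomial

noncomputable def cubicA1A5 : MvPolynomial (Fin 4) ℂ :=
  X 3 * (X 0 * X 2 - X 1 ^ 2) + X 0 ^ 3

/-!
A subspace `W` of dimension at least two contains some `w ≠ 0` with `w 3 = 0`, and on the surface
`t3 = 0` forces `t0 = 0`. If some `v ∈ W` had `v 0 ≠ 0`, and so `v 3 ≠ 0`, then restricting the
cubic to the affine line `v + c • w` would give a polynomial of degree at most two in `c`, all of
whose coefficients vanish; this forces `w = 0`. Hence `W` lies in the section of the surface by the
plane `t0 = 0`, which is the union of the two lines, and a vector space is not a union of two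
proper subspaces.
-/

open Cardinal Module

section LinearAlgebra

variable {K ι : Type*}

lemma spanSubset_pair [Semiring K] [Finite ι] [DecidableEq ι] (i j : ι) :
    Pi.spanSubset K {i, j} = Submodule.span K {Pi.single i 1, Pi.single j 1} := by
  simp only [Pi.spanSubset, Set.image_pair, Pi.basisFun_apply]

variable [DivisionRing K]

lemma eq_spanSubset_of_le [Finite ι] {W : Submodule K (ι → K)} {s : Set ι}
    (hs : s.ncard ≤ finrank K W) (hle : W ≤ Pi.spanSubset K s) : W = Pi.spanSubset K s :=
  Submodule.eq_of_le_of_finrank_le hle (Pi.dim_spanSubset.trans_le hs)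

lemma exists_mem_ne_zero_apply_eq_zero {V V' : Type*} [AddCommGroup V] [Module K V]
    [AddCommGroup V'] [Module K V'] [FiniteDimensional K V'] {W : Submodule K V}
    (hW : finrank K V' < finrank K W) (f : V →ₗ[K] V') : ∃ w ∈ W, w ≠ 0 ∧ f w = 0 := by
  have : FiniteDimensional K W := FiniteDimensional.of_finrank_pos (Nat.zero_lt_of_lt hW)
  have hker : LinearMap.ker (f.domRestrict W) ≠ ⊥ := LinearMap.ker_ne_bot_of_finrank_lt hW
  obtain ⟨w, hfw, hw⟩ := Submodule.exists_mem_ne_zero_of_ne_bot hker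
  exact ⟨w, w.2, by simpa using hw, hfw⟩

end LinearAlgebra

/-- The cubic form of `cubicA1A5` over an arbitrary commutative ring, used to describe the linear
subspaces of the surface over fields other than `ℂ`. -/
noncomputable def cubicA1A5Over (R : Type*) [CommRing R] : MvPolynomial (Fin 4) R :=
  X 3 * (X 0 * X 2 - X 1 ^ 2) + X 0 ^ 3

section CommRing

variable {R : Type*} [CommRing R]

lemma eval_cubicA1A5Over (x : Fin 4 → R) :
    eval x (cubicA1A5Over R) = x 3 * (x 0 * x 2 - x 1 ^ 2) + x 0 ^ 3 := by
  simp [cubicA1A5Over]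

lemma eval_cubicA1A5Over_add_smul (v : Fin 4 → R) {w : Fin 4 → R} (hw0 : w 0 = 0) (hw3 : w 3 = 0)
    (c : R) :
    eval (v + c • w) (cubicA1A5Over R) = eval v (cubicA1A5Over R)
      + v 3 * (v 0 * w 2 - 2 * v 1 * w 1) * c + -(v 3 * w 1 ^ 2) * c ^ 2 := by
  simp only [eval_cubicA1A5Over, Pi.add_apply, Pi.smul_apply, smul_eq_mul, hw0, hw3]
  ring

variable [NoZeroDivisors R]

lemma coeffs_eq_zero_of_forall_linear_add_sq_eq_zero (hR : 3 ≤ #R) {a b : R}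
    (h : ∀ c : R, a * c + b * c ^ 2 = 0) : a = 0 ∧ b = 0 := by
  obtain ⟨c, hc0, hc1⟩ := exists_ne_ne_of_three_le hR 0 1
  have hb : b = 0 := by
    have : c * (c - 1) * b = 0 := by linear_combination h c - c * h 1
    simpa [hc0, sub_ne_zero.mpr hc1] using this
  exact ⟨by simpa [hb] using h 1, hb⟩

lemma apply_zero_eq_zero_of_eval_cubicA1A5Over {x : Fin 4 → R}
    (hx : eval x (cubicA1A5Over R) = 0) (hx3 : x 3 = 0) : x 0 = 0 := by
  simpa [eval_cubicA1A5Over, hx3] using hx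

lemma eval_cubicA1A5Over_eq_zero_and_apply_zero_eq_zero_iff {x : Fin 4 → R} :
    eval x (cubicA1A5Over R) = 0 ∧ x 0 = 0 ↔
      x ∈ Pi.spanSubset R {2, 3} ∨ x ∈ Pi.spanSubset R {1, 2} := by
  have h23 : x ∈ Pi.spanSubset R {2, 3} ↔ x 0 = 0 ∧ x 1 = 0 := by
    simp [Pi.mem_spanSubset_iff, Fin.forall_fin_succ]
  have h12 : x ∈ Pi.spanSubset R {1, 2} ↔ x 0 = 0 ∧ x 3 = 0 := by
    simp [Pi.mem_spanSubset_iff, Fin.forall_fin_succ]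
  rw [h23, h12, ← and_or_left, and_comm, and_congr_right_iff]
  intro hx0
  simp [eval_cubicA1A5Over, hx0, or_comm]

lemma eq_zero_of_forall_eval_cubicA1A5Over_add_smul (hR : 3 ≤ #R) {v w : Fin 4 → R}
    (hv0 : v 0 ≠ 0) (hw0 : w 0 = 0) (hw3 : w 3 = 0)
    (h : ∀ c : R, eval (v + c • w) (cubicA1A5Over R) = 0) : w = 0 := by
  have hv : eval v (cubicA1A5Over R) = 0 := by simpa using h 0
  have hv3 : v 3 ≠ 0 := mt (apply_zero_eq_zero_of_eval_cubicA1A5Over hv) hv0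
  obtain ⟨hlin, hsq⟩ := coeffs_eq_zero_of_forall_linear_add_sq_eq_zero hR fun c ↦ by
    simpa only [eval_cubicA1A5Over_add_smul v hw0 hw3, hv, zero_add] using h c
  have hw1 : w 1 = 0 := by simpa [hv3] using hsq
  have hw2 : w 2 = 0 := by simpa [hv3, hv0, hw1] using hlin
  ext i
  fin_cases i <;> assumption

end CommRing

section Lines

variable {K : Type*} [Field K]

lemma apply_zero_eq_zero_of_forall_mem_eval_cubicA1A5Over (hK : 3 ≤ #K)
    {W : Submodule K (Fin 4 → K)} (hW : 2 ≤ finrank K W)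
    (h : ∀ x ∈ W, eval x (cubicA1A5Over K) = 0) {v : Fin 4 → K} (hv : v ∈ W) :
    v 0 = 0 := by
  by_contra hv0
  obtain ⟨w, hw, hw_ne, hw3⟩ := exists_mem_ne_zero_apply_eq_zero
    ((finrank_self K).trans_lt hW) (LinearMap.proj 3)
  exact hw_ne <| eq_zero_of_forall_eval_cubicA1A5Over_add_smul hK hv0
    (apply_zero_eq_zero_of_eval_cubicA1A5Over (h w hw) hw3) hw3
    fun c ↦ h _ (W.add_mem hv (W.smul_mem c hw))

theorem cubicA1A5_lines_general (hK : 3 ≤ #K) (W : Submodule K (Fin 4 → K))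
    (hW : 2 ≤ finrank K W) :
    (∀ x ∈ W, eval x (cubicA1A5Over K) = 0) ↔
      W = Submodule.span K {Pi.single 2 1, Pi.single 3 1} ∨
        W = Submodule.span K {Pi.single 1 1, Pi.single 2 1} := by
  simp only [← spanSubset_pair]
  constructor
  · intro h
    have hunion : ∀ x ∈ W, x ∈ Pi.spanSubset K {2, 3} ∨ x ∈ Pi.spanSubset K {1, 2} := fun x hx ↦
      eval_cubicA1A5Over_eq_zero_and_apply_zero_eq_zero_iff.mp
        ⟨h x hx, apply_zero_eq_zero_of_forall_mem_eval_cubicA1A5Over hK hW h hx⟩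
    exact (AddSubgroupClass.subset_union.mp hunion).imp
      (eq_spanSubset_of_le ((Set.ncard_pair (by decide)).trans_le hW))
      (eq_spanSubset_of_le ((Set.ncard_pair (by decide)).trans_le hW))
  · rintro (rfl | rfl) x hx
    · exact (eval_cubicA1A5Over_eq_zero_and_apply_zero_eq_zero_iff.mpr (.inl hx)).1
    · exact (eval_cubicA1A5Over_eq_zero_and_apply_zero_eq_zero_iff.mpr (.inr hx)).1

end Lines

theorem cubicA1A5_lines (W : Submodule ℂ (Fin 4 → ℂ)) (hW : Module.finrank ℂ W = 2) :
    (∀ x ∈ W, eval x cubicA1A5 = 0) ↔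
      W = Submodule.span ℂ {e 2, e 3} ∨ W = Submodule.span ℂ {e 1, e 2} :=
  cubicA1A5_lines_general (ofNat_lt_aleph0.le.trans (aleph0_le_mk ℂ)) W hW.ge
end
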